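/- Let B be an N_e×N_b complex matrix, v ∈ ℂ^{N_e}, and let σ > 0, p > 0 be reals. Consider the optimization problem of minimizing f(Q) = vᴴ (B Q Bᴴ + σ² I)⁻¹ v over all Hermitian positive semidefinite matrices Q ∈ ℂ^{N_b×N_b} with tr(Q) ≤ p (the matrix B Q Bᴴ + σ² I is Hermitian positive definite, hence invertible, for every such Q). Then there exists a minimizer of rank at most one: there is a Hermitian positive semidefinite Q★ with tr(Q★) ≤ p and rank(Q★) ≤ 1 such that f(Q★) ≤ f(Q) for every Hermitian positive semidefinite Q with tr(Q) ≤ p. -/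

import Mathlib

open Matrix
open scoped ComplexOrder

/-!
A positive semidefinite `Q` is at most `tr Q • I` in the Loewner order, so every feasible `Q`
satisfies `B Q Bᴴ ≤ B (p I) Bᴴ`. Inversion reverses the order, hence `f(Q) ≥ f(p I)`, although `p I`
itself is usually infeasible. The value `f(p I)` depends on `p I` only through its action on the
single vector `y = Bᴴ (B (p I) Bᴴ + σ² I)⁻¹ v`, and the feasible matrix `(p / ‖y‖²) y yᴴ` of rank
one acts on `y` in the same way, so it attains the bound.
-/

theorem posDef_mul_mul_conjTranspose_add {R m n : Type*} [Ring R] [PartialOrder R] [StarRing R]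
    [AddLeftMono R] [Finite m] [Fintype n] (B : Matrix m n R) {Q : Matrix n n R}
    (hQ : Q.PosSemidef) {N : Matrix m m R} (hN : N.PosDef) : (B * Q * Bᴴ + N).PosDef :=
  hN.posSemidef_add (hQ.mul_mul_conjTranspose_same B)

section StarOrderedField

variable {K m n : Type*} [Field K] [PartialOrder K] [StarRing K] [StarOrderedRing K] [Fintype m]
  [DecidableEq m]

/-- Both `B - A` and `A⁻¹ - B⁻¹` are Schur complements of the block matrix `[B, 1; 1, A⁻¹]`. -/
theorem posSemidef_inv_sub_inv {A B : Matrix m m K} (hA : A.PosDef) (hB : B.PosDef)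
    (hAB : (B - A).PosSemidef) : (A⁻¹ - B⁻¹).PosSemidef := by
  let _ := hB.isUnit.invertible
  let _ := hA.inv.isUnit.invertible
  have hA_inv_inv : A⁻¹⁻¹ = A :=
    nonsing_inv_nonsing_inv A ((isUnit_iff_isUnit_det A).mp hA.isUnit)
  have hblock : (fromBlocks B 1 1ᴴ A⁻¹).PosSemidef := by
    rw [PosDef.fromBlocks₂₂ B 1 hA.inv]
    simpa [hA_inv_inv] using hAB
  simpa using (PosDef.fromBlocks₁₁ 1 A⁻¹ hB).mp hblock

theorem dotProduct_inv_mulVec_anti {A B : Matrix m m K} (hA : A.PosDef) (hB : B.PosDef)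
    (hAB : (B - A).PosSemidef) (v : m → K) :
    star v ⬝ᵥ (B⁻¹ *ᵥ v) ≤ star v ⬝ᵥ (A⁻¹ *ᵥ v) := by
  rw [← sub_nonneg, ← dotProduct_sub, ← sub_mulVec]
  exact (posSemidef_inv_sub_inv hA hB hAB).dotProduct_mulVec_nonneg v

variable [Fintype n]

theorem dotProduct_inv_mul_mul_conjTranspose_add_anti (B : Matrix m n K) {Q R : Matrix n n K}
    (hQ : Q.PosSemidef) (hR : R.PosSemidef) (hQR : (R - Q).PosSemidef) {N : Matrix m m K}
    (hN : N.PosDef) (v : m → K) :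
    star v ⬝ᵥ ((B * R * Bᴴ + N)⁻¹ *ᵥ v) ≤ star v ⬝ᵥ ((B * Q * Bᴴ + N)⁻¹ *ᵥ v) := by
  refine dotProduct_inv_mulVec_anti (posDef_mul_mul_conjTranspose_add B hQ hN)
    (posDef_mul_mul_conjTranspose_add B hR hN) ?_ v
  simpa only [add_sub_add_right_eq_sub, Matrix.mul_sub, Matrix.sub_mul] using
    hQR.mul_mul_conjTranspose_same B

end StarOrderedField

theorem inv_mul_mul_add_mulVec_congr {R m n : Type*} [CommRing R] [Fintype m] [DecidableEq m]
    [Fintype n] {B : Matrix m n R} {C : Matrix n m R} {P Q : Matrix n n R} {N : Matrix m m R}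
    {v : m → R} (hP : IsUnit (B * P * C + N)) (hQ : IsUnit (B * Q * C + N))
    (hPQ : P *ᵥ (C *ᵥ ((B * Q * C + N)⁻¹ *ᵥ v)) = Q *ᵥ (C *ᵥ ((B * Q * C + N)⁻¹ *ᵥ v))) :
    (B * P * C + N)⁻¹ *ᵥ v = (B * Q * C + N)⁻¹ *ᵥ v := by
  let _ := hP.invertible
  let _ := hQ.invertible
  refine inv_mulVec_eq_vec (Eq.symm ?_)
  calc (B * P * C + N) *ᵥ ((B * Q * C + N)⁻¹ *ᵥ v)
      = (B * Q * C + N) *ᵥ ((B * Q * C + N)⁻¹ *ᵥ v) := by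
        simp only [add_mulVec, ← mulVec_mulVec, hPQ]
    _ = v := by rw [mulVec_mulVec, mul_inv_of_invertible, one_mulVec]

/-- The covariance matrix `(p / ‖y‖²) y yᴴ` of a signal that sends all of its power `p` in the
direction `y`. By the convention `p / 0 = 0` it vanishes for `y = 0`. -/
def beamCovariance {K n : Type*} [Field K] [StarRing K] [Fintype n] (p : K) (y : n → K) :
    Matrix n n K :=
  (p / (star y ⬝ᵥ y)) • vecMulVec y (star y)

section BeamCovariance

variable {K n : Type*} [Field K] [StarRing K] [Fintype n]

theorem rank_beamCovariance_le_one (p : K) (y : n → K) : (beamCovariance p y).rank ≤ 1 := by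
  rw [beamCovariance, ← smul_vecMulVec]
  exact rank_vecMulVec_le _ _

variable [PartialOrder K] [StarOrderedRing K]

theorem beamCovariance_mulVec_self (p : K) (y : n → K) : beamCovariance p y *ᵥ y = p • y := by
  rw [beamCovariance, smul_mulVec, vecMulVec_mulVec, op_smul_eq_smul, smul_smul]
  rcases eq_or_ne y 0 with rfl | hy
  · simp only [smul_zero]
  · rw [div_mul_cancel₀ p (dotProduct_star_self_eq_zero.not.mpr hy)]

theorem trace_beamCovariance_le {p : K} (hp : 0 ≤ p) (y : n → K) :
    (beamCovariance p y).trace ≤ p := by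
  rw [beamCovariance, trace_smul, trace_vecMulVec, dotProduct_comm y, smul_eq_mul]
  rcases eq_or_ne y 0 with rfl | hy
  · simpa only [dotProduct_zero, mul_zero] using hp
  · rw [div_mul_cancel₀ p (dotProduct_star_self_eq_zero.not.mpr hy)]

theorem posSemidef_beamCovariance [PosMulReflectLT K] {p : K} (hp : 0 ≤ p) (y : n → K) :
    (beamCovariance p y).PosSemidef :=
  (posSemidef_vecMulVec_self_star y).smul (div_nonneg hp (dotProduct_star_self_nonneg y))

end BeamCovariance

section RCLike

variable {𝕜 m n : Type*} [RCLike 𝕜] [Fintype m] [DecidableEq m] [Fintype n]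

open scoped MatrixOrder in
theorem posSemidef_trace_smul_one_sub {Q : Matrix m m 𝕜} (hQ : Q.PosSemidef) :
    (Q.trace • 1 - Q).PosSemidef := by
  have hle : Q ≤ algebraMap ℝ (Matrix m m 𝕜) (∑ i, hQ.isHermitian.eigenvalues i) := by
    refine le_algebraMap_of_spectrum_le (fun r hr => ?_) hQ.isHermitian
    obtain ⟨i, rfl⟩ := hQ.isHermitian.spectrum_real_eq_range_eigenvalues ▸ hr
    exact Finset.single_le_sum (fun j _ => hQ.eigenvalues_nonneg j) (Finset.mem_univ i)
  rw [Algebra.algebraMap_eq_smul_one, RCLike.real_smul_eq_coe_smul (K := 𝕜)] at hle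
  rw [hQ.isHermitian.trace_eq_sum_eigenvalues, ← RCLike.ofReal_sum]
  exact hle

theorem posSemidef_smul_one_sub_of_trace_le {Q : Matrix m m 𝕜} (hQ : Q.PosSemidef) {p : 𝕜}
    (htr : Q.trace ≤ p) : (p • 1 - Q).PosSemidef := by
  have hsplit : p • 1 - Q = (p - Q.trace) • 1 + (Q.trace • 1 - Q) := by
    rw [sub_smul, sub_add_sub_cancel]
  rw [hsplit]
  exact (PosSemidef.one.smul (sub_nonneg.mpr htr)).add (posSemidef_trace_smul_one_sub hQ)

theorem rank_one_jamming_covariance_optimal_general (B : Matrix m n 𝕜) (v : m → 𝕜)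
    {N : Matrix m m 𝕜} (hN : N.PosDef) {p : 𝕜} (hp : 0 ≤ p) :
    ∃ Qs : Matrix n n 𝕜, Qs.PosSemidef ∧ Qs.trace ≤ p ∧ Qs.rank ≤ 1 ∧
      ∀ Q : Matrix n n 𝕜, Q.PosSemidef → Q.trace ≤ p →
        star v ⬝ᵥ ((B * Qs * Bᴴ + N)⁻¹ *ᵥ v) ≤ star v ⬝ᵥ ((B * Q * Bᴴ + N)⁻¹ *ᵥ v) := by
  classical
  have hI : (p • 1 : Matrix n n 𝕜).PosSemidef := PosSemidef.one.smul hp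
  let y := Bᴴ *ᵥ ((B * (p • (1 : Matrix n n 𝕜)) * Bᴴ + N)⁻¹ *ᵥ v)
  have hbeam : (beamCovariance p y).PosSemidef := posSemidef_beamCovariance hp y
  have hbeam_y : beamCovariance p y *ᵥ y = (p • (1 : Matrix n n 𝕜)) *ᵥ y := by
    rw [beamCovariance_mulVec_self, smul_mulVec, one_mulVec]
  refine ⟨beamCovariance p y, hbeam, trace_beamCovariance_le hp y,
    rank_beamCovariance_le_one p y, fun Q hQ htr => ?_⟩
  calc star v ⬝ᵥ ((B * beamCovariance p y * Bᴴ + N)⁻¹ *ᵥ v)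
      = star v ⬝ᵥ ((B * (p • (1 : Matrix n n 𝕜)) * Bᴴ + N)⁻¹ *ᵥ v) := by
        rw [inv_mul_mul_add_mulVec_congr (posDef_mul_mul_conjTranspose_add B hbeam hN).isUnit
          (posDef_mul_mul_conjTranspose_add B hI hN).isUnit hbeam_y]
    _ ≤ star v ⬝ᵥ ((B * Q * Bᴴ + N)⁻¹ *ᵥ v) :=
        dotProduct_inv_mul_mul_conjTranspose_add_anti B hQ hI
          (posSemidef_smul_one_sub_of_trace_le hQ htr) hN v

end RCLike

/-- Lemma 1 of the paper: the optimization problem of minimizing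
`f(Q) = vᴴ (B Q Bᴴ + σ² I)⁻¹ v` over Hermitian PSD matrices `Q` with `tr(Q) ≤ p`
admits a minimizer of rank at most one. -/
theorem rank_one_jamming_covariance_optimal
    (Ne Nb : ℕ) (B : Matrix (Fin Ne) (Fin Nb) ℂ) (v : Fin Ne → ℂ)
    (σ p : ℝ) (hσ : 0 < σ) (hp : 0 < p) :
    ∃ Qs : Matrix (Fin Nb) (Fin Nb) ℂ,
      Qs.PosSemidef ∧ Qs.trace ≤ (p : ℂ) ∧ Qs.rank ≤ 1 ∧
      ∀ Q : Matrix (Fin Nb) (Fin Nb) ℂ, Q.PosSemidef → Q.trace ≤ (p : ℂ) →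
        star v ⬝ᵥ ((B * Qs * Bᴴ + ((σ ^ 2 : ℝ) : ℂ) • 1)⁻¹ *ᵥ v) ≤
          star v ⬝ᵥ ((B * Q * Bᴴ + ((σ ^ 2 : ℝ) : ℂ) • 1)⁻¹ *ᵥ v) :=
  rank_one_jamming_covariance_optimal_general B v
    (PosDef.one.smul (Complex.zero_lt_real.mpr (sq_pos_of_pos hσ))) (Complex.zero_le_real.mpr hp.le)
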